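/- arXiv:1812.04294 — 2 statements merged into one kernel-verified Lean document; each statement's English description precedes it below -/
import Mathlib

section
/- Let s be an even positive integer and n an odd integer with n > 3s, and let f(X) = X^n + X^(n-s) + X^(n-2s) + X^(n-3s) + 1 in F_2[X]. Let t_f denote the number of irreducible factors of f in F_2[X], counted with multiplicity. Then t_f is odd if n ≡ 1 or n ≡ -1 (mod 8), and t_f is even otherwise. -/
open Polynomial

/-!
The proof is the Stickelberger–Swan argument. Over `ZMod 2`, Frobenius permutes the roots of a
separable `f` of degree `n`, with one orbit for each irreducible factor, so this permutation has
sign `(-1) ^ (n + t_f)`. Let `F` be a monic integral lift of `f`. Its roots live in the Witt vectors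
of a splitting field of `f`, where the lift of Frobenius multiplies the square root
`∏ i < j, (x j - x i)` of `disc F` by that sign. A square root of an odd integer `D` in this ring is
fixed exactly when `D ≡ 1 (mod 8)`, whence `disc F ≡ 1 (mod 8)` if and only if `n + t_f` is even.

For the pentanomial `F`, with `n` odd and `s = 2 r`, every root `x` satisfies
`x * F'(x) = -(n + 2 r u(x))` with `u(x) = x ^ (n - s) + 2 x ^ (n - 2s) + 3 x ^ (n - 3s)`. As `F`
has no monomials of even positive degree, Newton's identities show that the odd power sums of
exponent below `n` vanish. So `∑ u = 0`, and also `4 ∣ ∑ u ^ 2`, which together give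
`∏ F'(x) ≡ n ^ n ≡ n (mod 8)`; up to an explicit sign this product is `disc F`.
-/

section Cycles

variable {α β : Type*}

lemma card_quotient_eq_ncard_range {s : Setoid α} {g : α → β} (hg : ∀ a b, g a = g b ↔ s a b) :
    Nat.card (Quotient s) = (Set.range g).ncard := by
  obtain rfl : s = Setoid.ker g := Setoid.ext fun a b ↦ (hg a b).symm
  exact Nat.card_congr (Setoid.quotientKerEquivRange g)

variable [Fintype α] [DecidableEq α] (π : Equiv.Perm α)

lemma card_quotient_sameCycle :
    Nat.card (Quotient (Equiv.Perm.SameCycle.setoid π)) =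
      π.cycleFactorsFinset.card + π.supportᶜ.card := by
  let label : α → Equiv.Perm α ⊕ α :=
    fun a ↦ if a ∈ π.support then .inl (π.cycleOf a) else .inr a
  have label_eq_iff (a b : α) : label a = label b ↔ π.SameCycle a b := by
    by_cases ha : a ∈ π.support <;> by_cases hb : b ∈ π.support <;>
      simp only [label, ha, hb, if_true, if_false, Sum.inl.injEq, Sum.inr.injEq, reduceCtorEq,
        false_iff]
    · exact (Equiv.Perm.sameCycle_iff_cycleOf_eq_of_mem_support ha hb).symm
    · exact fun h ↦ hb (h.mem_support_iff.mp ha)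
    · exact fun h ↦ ha (h.mem_support_iff.mpr hb)
    · exact ⟨fun h ↦ h ▸ .refl π a, fun h ↦ h.eq_of_left (Equiv.Perm.notMem_support.mp ha)⟩
  have range_label : Set.range label = π.cycleFactorsFinset.disjSum π.supportᶜ := by
    ext z
    simp only [label, Set.mem_range, SetLike.mem_coe, Finset.mem_disjSum, Finset.mem_compl]
    constructor
    · rintro ⟨a, rfl⟩
      by_cases ha : a ∈ π.support
      · exact .inl ⟨_, Equiv.Perm.cycleOf_mem_cycleFactorsFinset_iff.mpr ha, (if_pos ha).symm⟩
      · exact .inr ⟨a, ha, (if_neg ha).symm⟩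
    · rintro (⟨c, hc, rfl⟩ | ⟨a, ha, rfl⟩)
      · obtain ⟨a, ha⟩ := (Equiv.Perm.mem_cycleFactorsFinset_iff.mp hc).1.nonempty_support
        refine ⟨a, ?_⟩
        rw [if_pos (Equiv.Perm.mem_cycleFactorsFinset_support_le hc ha),
          ← Equiv.Perm.cycle_is_cycleOf ha hc]
      · exact ⟨a, if_neg ha⟩
  rw [card_quotient_eq_ncard_range label_eq_iff, range_label, Set.ncard_coe_finset,
    Finset.card_disjSum]

lemma sign_eq_neg_one_pow_card_add_card_quotient_sameCycle :
    Equiv.Perm.sign π =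
      (-1) ^ (Fintype.card α + Nat.card (Quotient (Equiv.Perm.SameCycle.setoid π))) := by
  have hsplit : Fintype.card α + Nat.card (Quotient (Equiv.Perm.SameCycle.setoid π)) =
      π.support.card + π.cycleFactorsFinset.card + 2 * π.supportᶜ.card := by
    rw [card_quotient_sameCycle, ← Finset.card_add_card_compl π.support]
    ring
  rw [Equiv.Perm.sign_of_cycleType, Equiv.Perm.sum_cycleType, hsplit, pow_add _ _ (2 * _), pow_mul]
  simp [Equiv.Perm.cycleType_def]

end Cycles

section Factors

variable {K L ι : Type*} [Field K] [Field L] [Algebra K L]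

lemma mem_normalizedFactors_iff_exists_minpoly_eq [DecidableEq K] {f : K[X]} (hf : f ≠ 0)
    (hsplits : (f.map (algebraMap K L)).Splits) (p : K[X]) :
    p ∈ UniqueFactorizationMonoid.normalizedFactors f ↔
      ∃ a ∈ f.rootSet L, minpoly K a = p := by
  rw [UniqueFactorizationMonoid.mem_normalizedFactors_iff' hf]
  constructor
  · rintro ⟨hp, hnorm, hdvd⟩
    have hmonic : p.Monic := hnorm ▸ monic_normalize hp.ne_zero
    have hpsplits : (p.map (algebraMap K L)).Splits :=
      hsplits.of_dvd (Polynomial.map_ne_zero hf) (Polynomial.map_dvd _ hdvd)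
    obtain ⟨a, ha⟩ := hpsplits.exists_eval_eq_zero (by rw [degree_map]; exact hp.degree_pos.ne')
    rw [eval_map_algebraMap] at ha
    exact ⟨a, mem_rootSet.mpr ⟨hf, aeval_eq_zero_of_dvd_aeval_eq_zero hdvd ha⟩,
      (minpoly.eq_of_irreducible_of_monic hp ha hmonic).symm⟩
  · rintro ⟨a, ha, rfl⟩
    have hroot : aeval a f = 0 := (mem_rootSet.mp ha).2
    have hint : IsIntegral K a := isAlgebraic_iff_isIntegral.mp ⟨f, hf, hroot⟩
    exact ⟨minpoly.irreducible hint, (minpoly.monic hint).normalize_eq_self,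
      minpoly.dvd _ _ hroot⟩

lemma card_factors_eq_ncard_range_minpoly [Fintype ι] {f : K[X]} (hf : f.Separable) {y : ι → L}
    (hprod : f.map (algebraMap K L) = ∏ i, (X - C (y i))) :
    Multiset.card (UniqueFactorizationMonoid.factors f) =
      (Set.range fun i ↦ minpoly K (y i)).ncard := by
  classical
  have hroots (a : L) : a ∈ f.rootSet L ↔ ∃ i, y i = a := by
    rw [mem_rootSet_of_ne hf.ne_zero, ← eval_map_algebraMap, hprod, eval_prod,
      Finset.prod_eq_zero_iff]
    simp [sub_eq_zero, eq_comm]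
  have hrange : (Set.range fun i ↦ minpoly K (y i)) =
      (UniqueFactorizationMonoid.normalizedFactors f).toFinset := by
    ext p
    have hsplits : (f.map (algebraMap K L)).Splits :=
      hprod ▸ Splits.prod fun i _ ↦ Splits.X_sub_C (y i)
    simp only [Set.mem_range, SetLike.mem_coe, Multiset.mem_toFinset,
      mem_normalizedFactors_iff_exists_minpoly_eq hf.ne_zero hsplits, hroots,
      exists_exists_eq_and]
  rw [hrange, Set.ncard_coe_finset, Multiset.toFinset_card_of_nodup
    ((UniqueFactorizationMonoid.squarefree_iff_nodup_normalizedFactors hf.ne_zero).mp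
      hf.squarefree), UniqueFactorizationMonoid.normalizedFactors, Multiset.card_map]

variable [Fintype K]

lemma minpoly_eq_iff_exists_pow_card_pow_eq [Finite L] (a b : L) :
    minpoly K a = minpoly K b ↔ ∃ m : ℕ, a ^ Fintype.card K ^ m = b := by
  have hpow (m : ℕ) :
      (FiniteField.frobeniusAlgEquivOfAlgebraic K L ^ m) • a = a ^ Fintype.card K ^ m := by
    rw [AlgEquiv.smul_def, AlgEquiv.coe_pow, FiniteField.coe_frobeniusAlgEquivOfAlgebraic_iterate]
  rw [eq_comm, Normal.minpoly_eq_iff_mem_orbit L]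
  constructor
  · rintro ⟨g, rfl⟩
    obtain ⟨m, rfl⟩ := (FiniteField.bijective_frobeniusAlgEquivOfAlgebraic_pow K L).2 g
    exact ⟨m, (hpow m).symm⟩
  · rintro ⟨m, rfl⟩
    exact ⟨_, hpow m⟩

lemma minpoly_eq_iff_sameCycle [Finite L] [Finite ι] {y : ι → L} (hy : y.Injective)
    {π : Equiv.Perm ι} (hπ : ∀ i, y (π i) = y i ^ Fintype.card K) (i j : ι) :
    minpoly K (y i) = minpoly K (y j) ↔ π.SameCycle i j := by
  have hiter (m : ℕ) : y ((π ^ m) i) = y i ^ Fintype.card K ^ m := by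
    induction m with
    | zero => simp
    | succ m ih => rw [pow_succ', Equiv.Perm.mul_apply, hπ, ih, ← pow_mul, ← pow_succ]
  simp_rw [minpoly_eq_iff_exists_pow_card_pow_eq, ← hiter, hy.eq_iff]
  exact ⟨fun ⟨m, hm⟩ ↦ ⟨m, hm⟩, Equiv.Perm.SameCycle.exists_nat_pow_eq⟩

theorem card_factors_eq_card_quotient_sameCycle [Finite L] [Fintype ι] {f : K[X]}
    (hf : f.Separable) {y : ι → L} (hprod : f.map (algebraMap K L) = ∏ i, (X - C (y i)))
    {π : Equiv.Perm ι} (hπ : ∀ i, y (π i) = y i ^ Fintype.card K) :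
    Multiset.card (UniqueFactorizationMonoid.factors f) =
      Nat.card (Quotient (Equiv.Perm.SameCycle.setoid π)) := by
  have hy : y.Injective := Separable.injective_of_prod_X_sub_C (hprod ▸ hf.map)
  rw [card_factors_eq_ncard_range_minpoly hf hprod,
    card_quotient_eq_ncard_range (minpoly_eq_iff_sameCycle hy hπ)]

end Factors

section Discriminant

variable {R S ι : Type*} [CommRing R] [CommRing S]

lemma resultant_derivative_of_monic {F : R[X]} (hF : F.Monic) :
    resultant F F.derivative F.natDegree (F.natDegree - 1) =
      (-1) ^ (F.natDegree * (F.natDegree - 1) / 2) * F.discr := by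
  nontriviality R
  rcases F.natDegree.eq_zero_or_pos with h0 | hpos
  · rw [hF.natDegree_eq_zero.mp h0, ← C_1, discr_C]
    simp
  · rw [resultant_deriv (natDegree_pos_iff_degree_pos.mp hpos), hF.leadingCoeff, mul_one]

lemma discr_map_of_monic {F : R[X]} (hF : F.Monic) (φ : R →+* S) :
    (F.map φ).discr = φ F.discr := by
  nontriviality S
  have h := resultant_derivative_of_monic (hF.map φ)
  rw [derivative_map, hF.natDegree_map, resultant_map_map, resultant_derivative_of_monic hF,
    map_mul, map_pow, map_neg, map_one] at h
  exact ((isUnit_neg_one.pow _).mul_left_cancel h).symm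

lemma prod_eval_derivative_prod_X_sub_C [Fintype ι] (x : ι → R) :
    ∏ i, (derivative (∏ j, (X - C (x j)))).eval (x i) =
      (-1) ^ (Fintype.card ι * (Fintype.card ι - 1) / 2) * (∏ j, (X - C (x j))).discr := by
  nontriviality R
  have hmonic : (∏ j, (X - C (x j))).Monic := monic_prod_X_sub_C x Finset.univ
  have hdeg : (∏ j, (X - C (x j))).natDegree = Fintype.card ι :=
    natDegree_finsetProd_X_sub_C_eq_card Finset.univ x
  have hdeg' := natDegree_derivative_le (∏ j, (X - C (x j)))
  rw [← hdeg, ← resultant_derivative_of_monic hmonic, resultant_prod_left _ _ _ _ (by simp) hdeg']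
  simp_rw [natDegree_X_sub_C, resultant_X_sub_C_left _ _ _ hdeg']

lemma prod_eval_derivative_eq_det_vandermonde_sq {n : ℕ} (x : Fin n → R) :
    ∏ i, (derivative (∏ j, (X - C (x j)))).eval (x i) =
      (-1) ^ (n * (n - 1) / 2) * (Matrix.vandermonde x).det ^ 2 := by
  have heval (i : Fin n) : (derivative (∏ j, (X - C (x j)))).eval (x i) =
      ∏ j ∈ {i}ᶜ, (x i - x j) := by
    rw [← Lagrange.nodal_eq, Lagrange.eval_nodal_derivative_eval_node_eq (Finset.mem_univ i),
      Lagrange.eval_nodal, Finset.compl_singleton]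
  have hpair (i j : Fin n) : (x i - x j) * (x j - x i) = -1 * (x j - x i) ^ 2 := by ring
  have hcard : ∑ i : Fin n, (n - 1 - i) = n * (n - 1) / 2 := by
    rw [Fin.sum_univ_eq_sum_range (fun i ↦ n - 1 - i), Finset.sum_range_reflect (fun i ↦ i),
      Finset.sum_range_id]
  simp_rw [heval, ← Finset.prod_prod_Ioi_mul_eq_prod_prod_off_diag (fun j i ↦ x i - x j), hpair,
    Finset.prod_mul_distrib, Finset.prod_const, Fin.card_Ioi, Finset.prod_pow_eq_pow_sum, hcard,
    Finset.prod_pow, Matrix.det_vandermonde]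

lemma discr_prod_X_sub_C {n : ℕ} (x : Fin n → R) :
    (∏ i, (X - C (x i))).discr = (Matrix.vandermonde x).det ^ 2 := by
  have h := prod_eval_derivative_prod_X_sub_C x
  rw [prod_eval_derivative_eq_det_vandermonde_sq, Fintype.card_fin] at h
  exact ((isUnit_neg_one.pow _).mul_left_cancel h).symm

end Discriminant

section Lifting

lemma isRoot_of_eq_prod_X_sub_C {R ι : Type*} [CommRing R] [Fintype ι] {F : R[X]} {x : ι → R}
    (hx : F = ∏ i, (X - C (x i))) (i : ι) : F.IsRoot (x i) := by
  rw [hx, IsRoot, eval_prod]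
  exact Finset.prod_eq_zero (Finset.mem_univ i) (by simp)

lemma exists_eq_prod_X_sub_C_of_splits {R : Type*} [CommRing R] [IsDomain R] {F : R[X]}
    (hF : F.Monic) (hsplits : F.Splits) :
    ∃ x : Fin F.natDegree → R, F = ∏ i, (X - C (x i)) := by
  have hlen : F.natDegree = F.roots.toList.length := by
    rw [Multiset.length_toList, hsplits.natDegree_eq_card_roots]
  refine ⟨F.roots.toList.get ∘ finCongr hlen, ?_⟩
  calc F = (F.roots.map fun a ↦ X - C a).prod := hsplits.eq_prod_roots_of_monic hF
    _ = (F.roots.toList.map fun a ↦ X - C a).prod := (Multiset.prod_map_toList ..).symm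
    _ = ∏ i, (X - C (F.roots.toList.get i)) := (Fin.prod_univ_fun_getElem ..).symm
    _ = _ := ((finCongr hlen).prod_comp fun i ↦ X - C (F.roots.toList.get i)).symm

lemma eq_prod_X_sub_C_of_injective {R ι : Type*} [CommRing R] [IsDomain R] [Fintype ι] {F : R[X]}
    (hF : F.Monic) {x : ι → R} (hx : x.Injective) (hroot : ∀ i, F.IsRoot (x i))
    (hdeg : F.natDegree = Fintype.card ι) : F = ∏ i, (X - C (x i)) := by
  refine eq_of_monic_of_dvd_of_natDegree_le (monic_prod_X_sub_C x Finset.univ) hF ?_ ?_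
  · have hprod : ∏ i, (X - C (x i)) = ((Finset.univ.val.map x).map fun a ↦ X - C a).prod := by
      rw [Multiset.map_map, Function.comp_def, Finset.prod_eq_multiset_prod]
    rw [hprod, Multiset.prod_X_sub_C_dvd_iff_le_roots hF.ne_zero,
      Multiset.le_iff_subset (Finset.univ.nodup.map hx)]
    intro a ha
    obtain ⟨i, -, rfl⟩ := Multiset.mem_map.mp ha
    exact (mem_roots hF.ne_zero).mpr (hroot i)
  · rw [natDegree_finsetProd_X_sub_C_eq_card, Finset.card_univ, hdeg]

lemma exists_eq_prod_X_sub_C_of_map_eq {R K ι : Type*} [CommRing R] [IsDomain R]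
    [HenselianLocalRing R] [Field K] [Fintype ι] {φ : R →+* K} (hφ : Function.Surjective φ)
    {F : R[X]} (hF : F.Monic) (hsep : (F.map φ).Separable) {y : ι → K}
    (hprod : F.map φ = ∏ i, (X - C (y i))) :
    ∃ x : ι → R, (∀ i, φ (x i) = y i) ∧ F = ∏ i, (X - C (x i)) := by
  have hker (a : R) : a ∈ IsLocalRing.maximalIdeal R ↔ φ a = 0 := by
    rw [← IsLocalRing.ker_eq_maximalIdeal φ hφ, RingHom.mem_ker]
  have hlift (i : ι) : ∃ a, F.IsRoot a ∧ φ a = y i := by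
    obtain ⟨a₀, ha₀⟩ := hφ (y i)
    have hroot : (F.map φ).eval (y i) = 0 := isRoot_of_eq_prod_X_sub_C hprod i
    have hderiv : (F.map φ).derivative.eval (y i) ≠ 0 :=
      hsep.eval₂_derivative_ne_zero (RingHom.id K) hroot
    rw [derivative_map, ← ha₀, eval_map_apply] at hderiv
    rw [← ha₀, eval_map_apply] at hroot
    obtain ⟨a, ha, hsub⟩ := HenselianLocalRing.is_henselian F hF a₀ ((hker _).mpr hroot)
      (IsLocalRing.notMem_maximalIdeal.mp fun h ↦ hderiv ((hker _).mp h))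
    rw [hker, map_sub, sub_eq_zero] at hsub
    exact ⟨a, ha, hsub.trans ha₀⟩
  choose x hroot hx using hlift
  have hy : y.Injective := Separable.injective_of_prod_X_sub_C (hprod ▸ hsep)
  refine ⟨x, hx, eq_prod_X_sub_C_of_injective hF
    (.of_comp (f := φ) ((funext hx : φ ∘ x = y) ▸ hy)) hroot ?_⟩
  rw [← hF.natDegree_map φ, hprod, natDegree_finsetProd_X_sub_C_eq_card, Finset.card_univ]

theorem henselianLocalRing_wittVector (p : ℕ) [Fact p.Prime] (k : Type*) [Field k] [CharP k p]
    [PerfectRing k p] : HenselianLocalRing (WittVector p k) where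
  is_henselian f hf a ha hunit := by
    have hmax : IsLocalRing.maximalIdeal (WittVector p k) = Ideal.span {(p : WittVector p k)} := by
      rw [← WittVector.ker_constantCoeff, IsLocalRing.ker_eq_maximalIdeal _
        (WittVector.constantCoeff_surjective p)]
    rw [hmax] at ha ⊢
    exact HenselianRing.is_henselian f hf a ha (hunit.map _)

end Lifting

section Frobenius

variable {R : Type*} [CommRing R]

lemma exists_perm_of_map_eq_self [IsDomain R] {ι : Type*} [Fintype ι] {σ : R →+* R}
    (hσ : Function.Injective σ) {x : ι → R} (hx : x.Injective)
    (hmap : (∏ i, (X - C (x i))).map σ = ∏ i, (X - C (x i))) :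
    ∃ π : Equiv.Perm ι, ∀ i, σ (x i) = x (π i) := by
  have hroot (i : ι) : ∃ j, σ (x i) = x j := by
    have h : (∏ j, (X - C (x j))).eval (σ (x i)) = 0 := by
      rw [← hmap, eval_map_apply, (isRoot_of_eq_prod_X_sub_C rfl i).eq_zero, map_zero]
    simpa [eval_prod, Finset.prod_eq_zero_iff, sub_eq_zero] using h
  choose p hp using hroot
  have hp_inj : p.Injective := fun i j hij ↦ hx (hσ (by rw [hp, hp, hij]))
  exact ⟨.ofBijective p (Finite.injective_iff_bijective.mp hp_inj), hp⟩

lemma map_det_vandermonde_eq_sign_mul {n : ℕ} {σ : R →+* R} {x : Fin n → R}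
    {π : Equiv.Perm (Fin n)} (hπ : ∀ i, σ (x i) = x (π i)) :
    σ (Matrix.vandermonde x).det = (π.sign : ℤ) * (Matrix.vandermonde x).det := by
  rw [← Matrix.det_permute, RingHom.map_det]
  congr 1
  ext i j
  simp [Matrix.vandermonde_apply, hπ]

variable [IsDomain R] {K : Type*} [CommRing K] [IsReduced K] [CharP K 2] {φ : R →+* K}

lemma exists_eq_one_add_two_mul_of_sq_eq_intCast (h2 : (2 : R) ≠ 0) (hker : ∀ z, φ z = 0 → 2 ∣ z)
    {δ : R} {D : ℤ} (hD : Odd D) (hδ : δ ^ 2 = D) :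
    ∃ (γ : R) (c : ℤ), δ = 1 + 2 * γ ∧ D = 1 + 4 * c ∧ γ ^ 2 + γ = c := by
  have two_eq_zero : (2 : K) = 0 := CharTwo.two_eq_zero
  obtain ⟨e, rfl⟩ := hD
  have hφδ : φ (δ - 1) = 0 := by
    have h := congrArg φ hδ
    rw [map_pow, map_intCast] at h
    push_cast at h
    rw [map_sub, map_one]
    refine eq_zero_of_pow_eq_zero (n := 2) ?_
    linear_combination h + (1 - φ δ + e) * two_eq_zero
  obtain ⟨γ, hγ⟩ := hker _ hφδ
  obtain rfl : δ = 1 + 2 * γ := by linear_combination hγ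
  have he : (e : R) = 2 * (γ ^ 2 + γ) := by
    push_cast at hδ
    refine mul_left_cancel₀ h2 ?_
    linear_combination -hδ
  have hφe : (e : K) = 0 := by
    rw [← map_intCast φ, he, map_mul, map_ofNat, two_eq_zero, zero_mul]
  obtain ⟨c, rfl⟩ := (CharP.intCast_eq_zero_iff K 2 e).mp hφe
  refine ⟨γ, c, rfl, by push_cast; ring, mul_left_cancel₀ h2 ?_⟩
  push_cast at he
  exact he.symm

lemma modEq_one_iff_of_frobeniusLift_eq_mul {σ : R →+* R} (h2 : (2 : R) ≠ 0)
    (hker : ∀ z, φ z = 0 → 2 ∣ z) (hσ : ∀ z, φ (σ z) = φ z ^ 2) {δ : R} {D : ℤ} (hD : Odd D)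
    (hδ : δ ^ 2 = D) {ε : ℤˣ} (hε : σ δ = (ε : ℤ) * δ) : D ≡ 1 [ZMOD 8] ↔ ε = 1 := by
  have two_eq_zero : (2 : K) = 0 := CharTwo.two_eq_zero
  have : Nontrivial K := CharP.nontrivial_of_char_ne_one (v := 2) (by decide)
  obtain ⟨γ, c, rfl, rfl, hc⟩ := exists_eq_one_add_two_mul_of_sq_eq_intCast h2 hker hD hδ
  have hσδ : σ (1 + 2 * γ) = 1 + 2 * σ γ := by rw [map_add, map_mul, map_one, map_ofNat]
  have hD_iff : 1 + 4 * c ≡ 1 [ZMOD 8] ↔ (c : K) = 0 := by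
    rw [CharP.intCast_eq_zero_iff K 2 c, Int.modEq_iff_dvd]
    push_cast
    omega
  have hφc : (c : K) = φ (σ γ) - φ γ := by
    rw [← map_intCast φ, ← hc, map_add, map_pow, hσ]
    linear_combination φ γ * two_eq_zero
  rw [hD_iff, hφc]
  rcases Int.units_eq_one_or ε with rfl | rfl
  · have hσγ : σ γ = γ := by
      refine mul_left_cancel₀ h2 ?_
      rw [hσδ, Units.val_one, Int.cast_one] at hε
      linear_combination hε
    simp [hσγ]
  · have hσγ : σ γ = -1 - γ := by
      refine mul_left_cancel₀ h2 ?_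
      rw [hσδ, Units.val_neg, Units.val_one, Int.cast_neg, Int.cast_one] at hε
      linear_combination hε
    have hone : φ (σ γ) - φ γ = 1 := by
      rw [hσγ, map_sub, map_neg, map_one]
      linear_combination -(1 + φ γ) * two_eq_zero
    rw [hone]
    exact iff_of_false one_ne_zero (by decide)

end Frobenius

section Swan

lemma isUnit_discr_iff_separable {R : Type*} [CommRing R] {F : R[X]} (hF : F.Monic) :
    IsUnit F.discr ↔ F.Separable := by
  have hdeg : resultant F F.derivative F.natDegree (F.natDegree - 1) =
      resultant F F.derivative := by
    obtain ⟨j, hj⟩ := Nat.exists_eq_add_of_le (natDegree_derivative_le F)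
    rw [hj, resultant_add_right_deg _ _ _ _ _ le_rfl, hF.coeff_natDegree, one_pow, one_mul]
  rw [Separable, ← isUnit_resultant_iff_isCoprime hF, ← hdeg, resultant_derivative_of_monic hF,
    IsUnit.mul_iff, and_iff_right (isUnit_neg_one.pow _)]

lemma odd_discr_of_separable_map {F : ℤ[X]} (hF : F.Monic)
    (hsep : (F.map (Int.castRingHom (ZMod 2))).Separable) : Odd F.discr := by
  have h := (isUnit_discr_iff_separable (hF.map _)).mpr hsep
  rwa [discr_map_of_monic hF, isUnit_iff_ne_zero, eq_intCast, Ne,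
    ZMod.intCast_eq_zero_iff_even, Int.not_even_iff_odd] at h

variable {R k : Type*} [CommRing R] [IsDomain R] [HenselianLocalRing R] [Field k] [Finite k]
  [Algebra (ZMod 2) k]

lemma discr_modEq_one_iff_of_frobeniusLift {φ : R →+* k} (hφ : Function.Surjective φ)
    (h2 : (2 : R) ≠ 0) (hker : ∀ z, φ z = 0 → 2 ∣ z) {σ : R →+* R}
    (hσ_inj : Function.Injective σ) (hσ : ∀ z, φ (σ z) = φ z ^ 2) {F : ℤ[X]} (hF : F.Monic)
    {f : (ZMod 2)[X]} (hf : F.map (Int.castRingHom (ZMod 2)) = f) (hsep : f.Separable)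
    (hsplits : (f.map (algebraMap (ZMod 2) k)).Splits) :
    F.discr ≡ 1 [ZMOD 8] ↔
      Even (F.natDegree + Multiset.card (UniqueFactorizationMonoid.factors f)) := by
  have : CharP k 2 := charP_of_injective_algebraMap (algebraMap (ZMod 2) k).injective 2
  have hmap : (F.map (Int.castRingHom R)).map φ = f.map (algebraMap (ZMod 2) k) := by
    rw [← hf, Polynomial.map_map, Polynomial.map_map]
    exact congrArg (map · F) (RingHom.ext_int _ _)
  have hmap_σ : (F.map (Int.castRingHom R)).map σ = F.map (Int.castRingHom R) := by
    rw [Polynomial.map_map]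
    exact congrArg (map · F) (RingHom.ext_int _ _)
  have hmonic : (f.map (algebraMap (ZMod 2) k)).Monic := hf ▸ (hF.map _).map _
  obtain ⟨y, hy⟩ := exists_eq_prod_X_sub_C_of_splits hmonic hsplits
  obtain ⟨x, hxy, hx⟩ := exists_eq_prod_X_sub_C_of_map_eq hφ (hF.map (Int.castRingHom R))
    (hmap ▸ hsep.map) (hmap.trans hy)
  have hy_inj : y.Injective := Separable.injective_of_prod_X_sub_C (hy ▸ hsep.map)
  have hx_inj : x.Injective := .of_comp (f := φ) ((funext hxy : φ ∘ x = y) ▸ hy_inj)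
  obtain ⟨π, hπ⟩ := exists_perm_of_map_eq_self hσ_inj hx_inj (hx ▸ hmap_σ)
  have hπy (i) : y (π i) = y i ^ Fintype.card (ZMod 2) := by
    rw [← hxy, ← hπ, hσ, hxy, ZMod.card]
  have hdiscr : (Matrix.vandermonde x).det ^ 2 = F.discr := by
    rw [← discr_prod_X_sub_C, ← hx, discr_map_of_monic hF, eq_intCast]
  rw [modEq_one_iff_of_frobeniusLift_eq_mul h2 hker hσ (odd_discr_of_separable_map hF (hf ▸ hsep))
    hdiscr (map_det_vandermonde_eq_sign_mul hπ),
    sign_eq_neg_one_pow_card_add_card_quotient_sameCycle,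
    ← card_factors_eq_card_quotient_sameCycle hsep hy hπy, neg_one_pow_eq_one_iff_even (by decide),
    Fintype.card_fin, natDegree_map, ← hf, hF.natDegree_map]

theorem discr_modEq_one_iff_even_natDegree_add_card_factors {F : ℤ[X]} (hF : F.Monic)
    (hsep : (F.map (Int.castRingHom (ZMod 2))).Separable) :
    F.discr ≡ 1 [ZMOD 8] ↔ Even (F.natDegree + Multiset.card
      (UniqueFactorizationMonoid.factors (F.map (Int.castRingHom (ZMod 2))))) := by
  let k := (F.map (Int.castRingHom (ZMod 2))).SplittingField
  have : Finite k := Module.finite_of_finite (ZMod 2)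
  have : CharP k 2 := charP_of_injective_algebraMap (algebraMap (ZMod 2) k).injective 2
  have : PerfectRing k 2 := PerfectRing.ofFiniteOfIsReduced 2 k
  have := henselianLocalRing_wittVector 2 k
  have hker (z : WittVector 2 k) (hz : WittVector.constantCoeff z = 0) : 2 ∣ z := by
    have hmem := (WittVector.mem_span_p_iff_coeff_zero_eq_zero z).mpr hz
    exact mod_cast Ideal.mem_span_singleton.mp hmem
  exact discr_modEq_one_iff_of_frobeniusLift (WittVector.constantCoeff_surjective 2)
    (mod_cast WittVector.p_nonzero 2 k) hker (WittVector.frobenius_bijective 2 k).injective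
    (fun z ↦ WittVector.coeff_frobenius_charP 2 z 0) hF rfl hsep (SplittingField.splits _)

end Swan

section ProductModEight

-- `e` is the second elementary symmetric function of the `v i`; the factor `a ^ 2` avoids the
-- truncated exponents `#s - 1` and `#s - 2`.
open Finset in
lemma exists_sq_mul_prod_add_two_mul_eq {R ι : Type*} [CommRing R] (a : R) (v : ι → R)
    (s : Finset ι) : ∃ e w : R, (∑ i ∈ s, v i) ^ 2 = ∑ i ∈ s, v i ^ 2 + 2 * e ∧
      a ^ 2 * ∏ i ∈ s, (a + 2 * v i) =
        a ^ #s * (a ^ 2 + 2 * a * ∑ i ∈ s, v i + 4 * e) + 8 * w := by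
  classical
  induction s using Finset.induction_on with
  | empty => exact ⟨0, 0, by simp, by simp⟩
  | insert j s hj ih =>
    obtain ⟨e, w, he, hw⟩ := ih
    refine ⟨e + v j * ∑ i ∈ s, v i, w * (a + 2 * v j) + a ^ #s * e * v j, ?_, ?_⟩
    · rw [sum_insert hj, sum_insert hj]
      linear_combination he
    · rw [sum_insert hj, prod_insert hj, card_insert_of_notMem hj]
      linear_combination (a + 2 * v j) * hw

variable {R ι : Type*} [CommRing R] {v : ι → R} {s : Finset ι}

lemma two_dvd_sum_sq_of_sum_eq_zero (hv : ∑ i ∈ s, v i = 0) : 2 ∣ ∑ i ∈ s, v i ^ 2 := by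
  obtain ⟨e, -, he, -⟩ := exists_sq_mul_prod_add_two_mul_eq 0 v s
  exact ⟨-e, by linear_combination (∑ i ∈ s, v i) * hv - he⟩

lemma eight_dvd_prod_add_two_mul_sub_pow [IsDomain R] (h2 : (2 : R) ≠ 0) {a : ℤ} (ha : Odd a)
    (hv : ∑ i ∈ s, v i = 0) (hv2 : 4 ∣ ∑ i ∈ s, v i ^ 2) :
    8 ∣ ∏ i ∈ s, (a + 2 * v i) - (a : R) ^ s.card := by
  obtain ⟨e, w, he, hw⟩ := exists_sq_mul_prod_add_two_mul_eq (a : R) v s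
  obtain ⟨q, hq⟩ := hv2
  have he2 : e = -2 * q := mul_left_cancel₀ h2 (by
    linear_combination (∑ i ∈ s, v i) * hv - he - hq)
  obtain ⟨t, ht⟩ := Int.eight_dvd_sq_sub_one_of_odd ha
  have ht' : (a : R) ^ 2 = 1 + 8 * t := by
    rw [← sub_eq_iff_eq_add']; exact mod_cast congrArg (Int.cast : ℤ → R) ht
  rw [hv, he2, ht'] at hw
  refine ⟨w + t * (a : R) ^ s.card - a ^ s.card * q - t * ∏ i ∈ s, (a + 2 * v i), ?_⟩
  linear_combination hw

end ProductModEight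

section PowerSums

variable {R ι : Type*} [CommRing R] [Fintype ι] {x : ι → R}

lemma aeval_esymm_eq_zero_of_coeff_eq_zero {i : ℕ} (hi : i ≤ Fintype.card ι)
    (hcoeff : (∏ j, (X - C (x j))).coeff (Fintype.card ι - i) = 0) :
    MvPolynomial.aeval x (MvPolynomial.esymm ι R i) = 0 := by
  have h := Multiset.prod_X_sub_C_coeff (Finset.univ.val.map x) (k := Fintype.card ι - i) (by simp)
  rw [Multiset.map_map, Multiset.card_map, Finset.card_val, Finset.card_univ,
    Nat.sub_sub_self hi] at h
  rw [MvPolynomial.aeval_esymm_eq_multiset_esymm,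
    ← ((isUnit_neg_one (α := R)).pow i).mul_right_eq_zero, ← h]
  exact hcoeff

lemma sum_pow_eq_zero_of_odd
    (hcoeff : ∀ i < Fintype.card ι, Odd i → (∏ j, (X - C (x j))).coeff (Fintype.card ι - i) = 0)
    {k : ℕ} (hk : k < Fintype.card ι) (hodd : Odd k) : ∑ i, x i ^ k = 0 := by
  have hesymm (i) (hi : i < Fintype.card ι) (hi' : Odd i) :=
    aeval_esymm_eq_zero_of_coeff_eq_zero hi.le (hcoeff i hi hi')
  induction k using Nat.strong_induction_on with
  | _ k ih =>
    have newton := congrArg (MvPolynomial.aeval x)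
      (MvPolynomial.psum_eq_mul_esymm_sub_sum ι R k hodd.pos)
    rw [map_sub, map_mul, hesymm k hk hodd, map_sum, Finset.sum_eq_zero] at newton
    · simpa [MvPolynomial.psum] using newton
    rintro ⟨a, b⟩ hab
    obtain ⟨hab, ha_pos, ha_lt⟩ : a + b = k ∧ 0 < a ∧ a < k := by simpa using hab
    rw [map_mul, map_mul]
    obtain ha | ha := Nat.even_or_odd a
    · have hb : Odd b := by grind
      have hb_sum := ih b (by omega) (by omega) hb
      simp only [MvPolynomial.psum, map_sum, map_pow, MvPolynomial.aeval_X, hb_sum, mul_zero]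
    · rw [hesymm a (by omega) ha, mul_zero, zero_mul]

end PowerSums

section IntegralRoots

lemma splits_map_integralClosure (R K : Type*) [CommRing R] [Field K] [IsAlgClosed K]
    [Algebra R K] {F : R[X]} (hF : F.Monic) :
    (F.map (algebraMap R (integralClosure R K))).Splits := by
  refine Splits.of_splits_map_of_injective (i := algebraMap (integralClosure R K) K)
    Subtype.val_injective (IsAlgClosed.splits _) fun a ha ↦ ?_
  rw [Polynomial.map_map, ← IsScalarTower.algebraMap_eq] at ha
  exact ⟨⟨a, F, hF, (eval_map _ _).symm.trans (isRoot_of_mem_roots ha)⟩, rfl⟩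

attribute [local instance] FractionRing.liftAlgebra in
lemma dvd_of_algebraMap_dvd_algebraMap {R S : Type*} [CommRing R] [IsIntegrallyClosed R]
    [CommRing S] [IsDomain S] [Algebra R S] [FaithfulSMul R S] [Algebra.IsIntegral R S] {a b : R}
    (h : algebraMap R S a ∣ algebraMap R S b) : a ∣ b := by
  have : IsDomain R := IsDomain.of_faithfulSMul R S
  obtain rfl | ha := eq_or_ne a 0
  · rw [map_zero, zero_dvd_iff, FaithfulSMul.algebraMap_eq_zero_iff] at h
    rw [h]
  let K := FractionRing R
  let L := FractionRing S
  have : FaithfulSMul R L := .trans R S L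
  obtain ⟨z, hz⟩ := h
  have haK : algebraMap R K a ≠ 0 := (FaithfulSMul.algebraMap_eq_zero_iff R K).not.mpr ha
  have haL : algebraMap R L a ≠ 0 := (FaithfulSMul.algebraMap_eq_zero_iff R L).not.mpr ha
  have hzL : algebraMap K L (algebraMap R K b / algebraMap R K a) = algebraMap S L z := by
    rw [map_div₀, ← IsScalarTower.algebraMap_apply, ← IsScalarTower.algebraMap_apply,
      div_eq_iff haL, IsScalarTower.algebraMap_apply R S L, IsScalarTower.algebraMap_apply R S L,
      ← map_mul, hz, mul_comm]
  have hint : IsIntegral R (algebraMap R K b / algebraMap R K a) := by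
    rw [← isIntegral_algebraMap_iff (algebraMap K L).injective, hzL]
    exact (Algebra.IsIntegral.isIntegral z).algebraMap
  obtain ⟨c, hc⟩ := IsIntegrallyClosed.isIntegral_iff.mp hint
  refine ⟨c, IsFractionRing.injective R K ?_⟩
  rw [map_mul, hc, mul_div_cancel₀ _ haK]

end IntegralRoots

section Pentanomial

/-- The class 2 pentanomial `X^n + X^(n-s) + X^(n-2s) + X^(n-3s) + 1`, parametrised by
`d = n - 3s` to avoid truncated subtraction, over any ring so that the polynomial over `ZMod 2`
comes with its lift to `ℤ`. -/
noncomputable def pentanomial (R : Type*) [Ring R] (d s : ℕ) : R[X] :=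
  X ^ (d + 3 * s) + X ^ (d + 2 * s) + X ^ (d + s) + X ^ d + 1

/-- The quantity `u(a)` for which `a * F'(a) = -(n + s * u(a))` at every root `a` of the class 2
pentanomial `F` of degree `n = d + 3 * s`. -/
def rootWeight {R : Type*} [Semiring R] (d s : ℕ) (a : R) : R :=
  a ^ (d + 2 * s) + 2 * a ^ (d + s) + 3 * a ^ d

variable {R : Type*} [CommRing R] {d s : ℕ}

lemma map_pentanomial {S : Type*} [CommRing S] (φ : R →+* S) (d s : ℕ) :
    (pentanomial R d s).map φ = pentanomial S d s := by
  simp [pentanomial]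

lemma natDegree_pentanomial [Nontrivial R] (hd : d ≠ 0) (hs : s ≠ 0) :
    (pentanomial R d s).natDegree = d + 3 * s := by
  unfold pentanomial
  compute_degree!
  · simp [hd, hs]
  all_goals omega

lemma monic_pentanomial (hd : d ≠ 0) (hs : s ≠ 0) : (pentanomial R d s).Monic := by
  nontriviality R
  rw [Monic, leadingCoeff, natDegree_pentanomial hd hs]
  simp [pentanomial, coeff_X_pow, coeff_one, hd, hs]

lemma coeff_pentanomial_of_even (hd : Odd d) (hs : Even s) {m : ℕ} (hm : Even m) (hm0 : m ≠ 0) :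
    (pentanomial R d s).coeff m = 0 := by
  have hne (j : ℕ) : m ≠ d + j * s := by grind
  have h1 : m ≠ d + s := by grind
  have h0 : m ≠ d := by grind
  simp [pentanomial, coeff_X_pow, coeff_one, hne, h1, h0, hm0]

lemma X_mul_derivative_pentanomial (R : Type*) [CommRing R] (d s : ℕ) :
    X * derivative (pentanomial R d s) = ((d + 3 * s : ℕ) : R[X]) * (pentanomial R d s - 1)
      - (s : R[X]) * rootWeight d s X := by
  have hX (k : ℕ) : X * derivative (X ^ k : R[X]) = (k : R[X]) * X ^ k := by
    cases k with
    | zero => simp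
    | succ k => rw [derivative_X_pow, Nat.add_sub_cancel, map_natCast, pow_succ', mul_left_comm]
  simp only [pentanomial, rootWeight, derivative_add, derivative_one, mul_add, hX]
  push_cast
  ring

lemma mul_eval_derivative_pentanomial_of_isRoot {a : R} (ha : (pentanomial R d s).IsRoot a) :
    a * (derivative (pentanomial R d s)).eval a = -((d + 3 * s : ℕ) + s * rootWeight d s a) := by
  have h := congrArg (eval a) (X_mul_derivative_pentanomial R d s)
  simp only [rootWeight, eval_mul, eval_sub, eval_add, eval_pow, eval_X, eval_natCast,
    eval_ofNat, eval_one, ha.eq_zero] at h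
  rw [h, rootWeight]
  ring

lemma separable_pentanomial [CharP R 2] (hd : Odd d) (hs : Even s) :
    (pentanomial R d s).Separable := by
  have hn : ((d + 3 * s : ℕ) : R[X]) = 1 := by
    rw [CharTwo.natCast_eq_ite, if_neg (by grind)]
  have hs' : (s : R[X]) = 0 := by rw [CharTwo.natCast_eq_ite, if_pos hs]
  have h := X_mul_derivative_pentanomial R d s
  rw [hn, hs'] at h
  exact ⟨1, -X, by linear_combination -h⟩

lemma pow_two_mul_add_eq_of_isRoot_pentanomial {a : R} (ha : (pentanomial R d s).IsRoot a) :
    a ^ (2 * (d + 2 * s)) = a ^ (2 * d) + a ^ d - a ^ (d + s) := by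
  have h : a ^ (d + 3 * s) + a ^ (d + 2 * s) + a ^ (d + s) + a ^ d + 1 = 0 := by
    simpa [pentanomial] using ha
  linear_combination a ^ d * (a ^ s - 1) * h

section Roots

variable {ι : Type*} [Fintype ι] {x : ι → R}

lemma sum_pow_eq_zero_of_pentanomial_eq_prod (hd : Odd d) (hs : Even s)
    (hcard : Fintype.card ι = d + 3 * s) (hx : pentanomial R d s = ∏ i, (X - C (x i)))
    {k : ℕ} (hk : k < d + 3 * s) (hodd : Odd k) : ∑ i, x i ^ k = 0 := by
  refine sum_pow_eq_zero_of_odd (fun i hi hi' ↦ ?_) (hcard ▸ hk) hodd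
  rw [← hx, hcard]
  exact coeff_pentanomial_of_even hd hs (by grind) (by omega)

lemma prod_eq_neg_one_of_pentanomial_eq_prod (hd : Odd d) (hs : Even s)
    (hcard : Fintype.card ι = d + 3 * s) (hx : pentanomial R d s = ∏ i, (X - C (x i))) :
    ∏ i, x i = -1 := by
  have hn : Odd (Fintype.card ι) := by grind
  have h0 : (0 : R) ^ d = 0 := zero_pow hd.pos.ne'
  have h : 1 = -∏ i, x i := by
    simpa [pentanomial, eval_prod, pow_add, h0, Finset.prod_neg, hn.neg_one_pow] using
      congrArg (eval 0) hx
  rw [h, neg_neg]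

lemma sum_rootWeight_eq_zero_of_pentanomial_eq_prod (hd : Odd d) (hs : Even s) (hs0 : s ≠ 0)
    (hcard : Fintype.card ι = d + 3 * s) (hx : pentanomial R d s = ∏ i, (X - C (x i))) :
    ∑ i, rootWeight d s (x i) = 0 := by
  have hsum {k : ℕ} := sum_pow_eq_zero_of_pentanomial_eq_prod hd hs hcard hx (k := k)
  simp only [rootWeight, Finset.sum_add_distrib, ← Finset.mul_sum, hsum (by omega : d < _) hd,
    hsum (by omega : d + s < _) (hd.add_even hs),
    hsum (by omega : d + 2 * s < _) (hd.add_even (even_two_mul s)), mul_zero, add_zero]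

lemma four_dvd_sum_rootWeight_sq_of_pentanomial_eq_prod (hd : Odd d) (hs : Even s) (hs0 : s ≠ 0)
    (hcard : Fintype.card ι = d + 3 * s) (hx : pentanomial R d s = ∏ i, (X - C (x i))) :
    4 ∣ ∑ i, rootWeight d s (x i) ^ 2 := by
  have hsum {k : ℕ} := sum_pow_eq_zero_of_pentanomial_eq_prod hd hs hcard hx (k := k)
  have hsum_ds := hsum (by omega) (hd.add_even hs)
  have hsum_d := hsum (by omega) hd
  obtain ⟨a, ha⟩ := two_dvd_sum_sq_of_sum_eq_zero hsum_ds
  obtain ⟨b, hb⟩ := two_dvd_sum_sq_of_sum_eq_zero hsum_d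
  have hsq (i) : rootWeight d s (x i) ^ 2 =
      10 * (x i ^ d) ^ 2 + 10 * (x i ^ (d + s)) ^ 2 + x i ^ d - x i ^ (d + s) +
        4 * (x i ^ (2 * d + 3 * s) + 3 * x i ^ (2 * d + s)) := by
    rw [rootWeight]
    linear_combination
      pow_two_mul_add_eq_of_isRoot_pentanomial (isRoot_of_eq_prod_X_sub_C hx i)
  simp only [hsq, Finset.sum_add_distrib, Finset.sum_sub_distrib, ← Finset.mul_sum, ha, hb,
    hsum_ds, hsum_d]
  exact ⟨5 * b + 5 * a + (∑ i, x i ^ (2 * d + 3 * s) + 3 * ∑ i, x i ^ (2 * d + s)), by ring⟩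

lemma eight_dvd_prod_eval_derivative_pentanomial_sub [IsDomain R] (h2 : (2 : R) ≠ 0)
    (hd : Odd d) (hs : Even s) (hs0 : s ≠ 0) (hcard : Fintype.card ι = d + 3 * s)
    (hx : pentanomial R d s = ∏ i, (X - C (x i))) :
    8 ∣ ∏ i, (derivative (pentanomial R d s)).eval (x i) -
      ((d + 3 * s : ℕ) : R) ^ (d + 3 * s) := by
  obtain ⟨r, rfl⟩ := hs.two_dvd
  have hn : Odd (d + 3 * (2 * r)) := by grind
  have hsum : ∑ i, r * rootWeight d (2 * r) (x i) = 0 := by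
    rw [← Finset.mul_sum, sum_rootWeight_eq_zero_of_pentanomial_eq_prod hd hs hs0 hcard hx,
      mul_zero]
  have hsum_sq : 4 ∣ ∑ i, (r * rootWeight d (2 * r) (x i)) ^ 2 := by
    simp only [mul_pow, ← Finset.mul_sum]
    exact (four_dvd_sum_rootWeight_sq_of_pentanomial_eq_prod hd hs hs0 hcard hx).mul_left _
  have hprod : ∏ i, (derivative (pentanomial R d (2 * r))).eval (x i) =
      ∏ i, (((d + 3 * (2 * r) : ℕ) : R) + 2 * (r * rootWeight d (2 * r) (x i))) := by
    have h := Fintype.prod_congr _ _ fun i ↦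
      mul_eval_derivative_pentanomial_of_isRoot (isRoot_of_eq_prod_X_sub_C hx i)
    rw [Finset.prod_mul_distrib, prod_eq_neg_one_of_pentanomial_eq_prod hd hs hcard hx,
      Finset.prod_neg, Finset.card_univ, hcard, hn.neg_one_pow, neg_one_mul, neg_one_mul,
      neg_inj] at h
    simpa only [Nat.cast_mul, Nat.cast_ofNat, mul_assoc] using h
  have h8 := eight_dvd_prod_add_two_mul_sub_pow h2 (a := (d + 3 * (2 * r) : ℕ))
    (mod_cast hn) hsum hsum_sq
  rw [Finset.card_univ, hcard, Int.cast_natCast] at h8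
  rwa [hprod]

end Roots

lemma neg_one_pow_mul_discr_pentanomial_modEq (hd : Odd d) (hs : Even s) (hs0 : s ≠ 0) {m : ℕ}
    (hm : d + 3 * s = 2 * m + 1) :
    (-1) ^ m * (pentanomial ℤ d s).discr ≡ (2 * m + 1) ^ (2 * m + 1) [ZMOD 8] := by
  let S := integralClosure ℤ ℂ
  have hF : (pentanomial ℤ d s).Monic := monic_pentanomial hd.pos.ne' hs0
  have hmap : (pentanomial ℤ d s).map (algebraMap ℤ S) = pentanomial S d s := map_pentanomial _ d s
  obtain ⟨x, hx⟩ := exists_eq_prod_X_sub_C_of_splits (hF.map _) (splits_map_integralClosure ℤ ℂ hF)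
  have hx' : pentanomial S d s = ∏ i, (X - C (x i)) := hmap.symm.trans hx
  have hcard : Fintype.card (Fin ((pentanomial ℤ d s).map (algebraMap ℤ S)).natDegree) =
      d + 3 * s := by
    rw [Fintype.card_fin, hmap, natDegree_pentanomial hd.pos.ne' hs0]
  have hdiscr : (pentanomial S d s).discr = algebraMap ℤ S (pentanomial ℤ d s).discr := by
    rw [← hmap, discr_map_of_monic hF]
  have hderiv := prod_eval_derivative_prod_X_sub_C x
  have hexp : (2 * m + 1) * (2 * m + 1 - 1) / 2 = (2 * m + 1) * m := by
    rw [Nat.add_sub_cancel, mul_left_comm, Nat.mul_div_cancel_left _ two_pos]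
  rw [hcard, hm, hexp, pow_mul, (odd_two_mul_add_one m).neg_one_pow, ← hx', hdiscr] at hderiv
  have h8 := eight_dvd_prod_eval_derivative_pentanomial_sub two_ne_zero hd hs hs0 hcard hx'
  rw [hderiv, hm] at h8
  refine (Int.modEq_iff_dvd.mpr (dvd_of_algebraMap_dvd_algebraMap (S := S) ?_)).symm
  convert h8 using 1 <;> push_cast <;> simp

lemma pow_two_mul_add_one_modEq (m : ℕ) : (2 * m + 1 : ℤ) ^ (2 * m + 1) ≡ 2 * m + 1 [ZMOD 8] := by
  have hsq : (2 * m + 1 : ℤ) ^ 2 ≡ 1 [ZMOD 8] :=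
    (Int.modEq_iff_dvd.mpr (Int.eight_dvd_sq_sub_one_of_odd (odd_two_mul_add_one _))).symm
  simpa [pow_succ, pow_mul] using (hsq.pow m).mul_right (2 * m + 1)

lemma discr_pentanomial_modEq_one_iff (hd : Odd d) (hs : Even s) (hs0 : s ≠ 0) :
    (pentanomial ℤ d s).discr ≡ 1 [ZMOD 8] ↔ (d + 3 * s) % 8 = 1 ∨ (d + 3 * s) % 8 = 7 := by
  obtain ⟨m, hm⟩ : Odd (d + 3 * s) := by grind
  have h := (neg_one_pow_mul_discr_pentanomial_modEq hd hs hs0 hm).trans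
    (pow_two_mul_add_one_modEq m)
  rw [Int.ModEq] at h ⊢
  obtain hpar | hpar := m.even_or_odd
  · rw [hpar.neg_one_pow, one_mul] at h
    grind
  · rw [hpar.neg_one_pow, neg_one_mul] at h
    grind

end Pentanomial

theorem class2_pentanomial_factor_parity (s n : ℕ) (hs : Even s) (hs0 : 0 < s)
    (hodd : Odd n) (hn : 3 * s < n) :
    Odd (Multiset.card (UniqueFactorizationMonoid.factors
        (X ^ n + X ^ (n - s) + X ^ (n - 2 * s) + X ^ (n - 3 * s) + 1 :
          Polynomial (ZMod 2)))) ↔ (n % 8 = 1 ∨ n % 8 = 7) := by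
  obtain ⟨d, rfl⟩ := Nat.exists_eq_add_of_le' hn.le
  have hd : Odd d := by grind
  have hf : (pentanomial ℤ d s).map (Int.castRingHom (ZMod 2)) =
      X ^ (d + 3 * s) + X ^ (d + 3 * s - s) + X ^ (d + 3 * s - 2 * s) +
        X ^ (d + 3 * s - 3 * s) + 1 := by
    rw [map_pentanomial, pentanomial]
    congr <;> omega
  have hsep : ((pentanomial ℤ d s).map (Int.castRingHom (ZMod 2))).Separable := by
    rw [map_pentanomial]
    exact separable_pentanomial hd hs
  have hswan := discr_modEq_one_iff_even_natDegree_add_card_factors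
    (monic_pentanomial hd.pos.ne' hs0.ne') hsep
  rw [discr_pentanomial_modEq_one_iff hd hs hs0.ne', natDegree_pentanomial hd.pos.ne' hs0.ne', hf,
    Nat.even_add] at hswan
  rw [hswan, ← Nat.not_odd_iff_even, iff_false_left (not_not.mpr hodd), Nat.not_even_iff_odd]
end

section
/- Let s be an even positive integer, n an odd integer with n > 3s, and let α_1, ..., α_n ∈ ℂ be the roots, counted with multiplicity, of F(X) = X^n + X^(n-s) + X^(n-2s) + X^(n-3s) + 1 ∈ ℤ[X]. Then S_{2n-4s} := Σ_{i=1}^n α_i^(2n-4s) is an even rational integer; that is, there exists k ∈ ℤ with Σ_{i=1}^n α_i^(2n-4s) = 2k. -/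
open Polynomial Finset

/-!
Let `eⱼ` and `pₖ` be the elementary symmetric functions and the power sums of the roots. Since `s`
is even, the coefficient of `X ^ (n - j)` in `F`, which is `± eⱼ`, vanishes for odd `j < n`. Hence
`j * eⱼ` is even for all `j < n`, and Newton's identities force `pₖ` to be even for `0 < k < n`. Now
take `k = n - 2 * s` in `p₂ₖ = pₖ ^ 2 - 2 * e₂(α₁ ^ k, …, αₙ ^ k)`, where the value of `e₂` is an
integer because it is a symmetric function of the roots.
-/

section PowerSums

open MvPolynomial (esymm)

variable {σ A R : Type*} [CommRing A] [CommRing R] [Algebra A R]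

theorem isSymmetric_expand {p : MvPolynomial σ A} (hp : p.IsSymmetric) (k : ℕ) :
    (MvPolynomial.expand k p).IsSymmetric := fun e => by
  rw [MvPolynomial.rename_expand, hp e]

variable [Fintype σ]

theorem esymm_eq_zero_of_card_lt {j : ℕ} (hj : Fintype.card σ < j) : esymm σ A j = 0 := by
  rw [MvPolynomial.esymm, powersetCard_eq_empty.2 hj, sum_empty]

theorem aeval_mem_of_isSymmetric {α : σ → R} {S : Subalgebra A R}
    (hS : ∀ j, MvPolynomial.aeval α (esymm σ A j) ∈ S)
    {p : MvPolynomial σ A} (hp : p.IsSymmetric) : MvPolynomial.aeval α p ∈ S := by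
  obtain ⟨q, hq⟩ := MvPolynomial.esymmAlgHom_surjective A le_rfl ⟨p, hp⟩
  have hpq : p = MvPolynomial.aeval (fun i : Fin (Fintype.card σ) => esymm σ A (i + 1)) q := by
    rw [← MvPolynomial.esymmAlgHom_apply, hq]
  have hrange : (MvPolynomial.aeval fun i : Fin (Fintype.card σ) =>
      MvPolynomial.aeval α (esymm σ A (i + 1))).range ≤ S := by
    rw [← Algebra.adjoin_range_eq_range_aeval]
    exact Algebra.adjoin_le (Set.range_subset_iff.2 fun i => hS (i + 1))
  rw [hpq, MvPolynomial.comp_aeval_apply]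
  exact hrange ⟨q, rfl⟩

variable (A) in
theorem sum_pow_eq_mul_esymm_sub_sum (α : σ → R) {k : ℕ} (hk : 0 < k) :
    ∑ i, α i ^ k =
      (-1) ^ (k + 1) * k * MvPolynomial.aeval α (esymm σ A k) -
        ∑ a ∈ antidiagonal k with a.1 ∈ Set.Ioo 0 k,
          (-1) ^ a.1 * MvPolynomial.aeval α (esymm σ A a.1) * ∑ i, α i ^ a.2 := by
  simpa [MvPolynomial.psum] using
    congrArg (MvPolynomial.aeval α) (MvPolynomial.psum_eq_mul_esymm_sub_sum σ A k hk)

variable (A) in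
theorem sum_pow_two_mul (α : σ → R) (k : ℕ) :
    ∑ i, α i ^ (2 * k) = (∑ i, α i ^ k) ^ 2 -
      2 * MvPolynomial.aeval α (MvPolynomial.expand k (esymm σ A 2)) := by
  have newton := sum_pow_eq_mul_esymm_sub_sum A (fun i => α i ^ k) two_pos
  have indices : {a ∈ antidiagonal 2 | a.1 ∈ Set.Ioo 0 2} = {(1, 1)} := by decide
  rw [indices, sum_singleton] at newton
  have hesymm : MvPolynomial.aeval (fun i => α i ^ k) (esymm σ A 1) = ∑ i, α i ^ k := by simp
  simp only [pow_one, ← pow_mul, mul_comm k, hesymm] at newton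
  rw [newton, MvPolynomial.aeval_expand, Pi.pow_def]
  push_cast
  ring

theorem sum_pow_mem_of_mul_esymm_mem {α : σ → R} (M : Submodule A R) {k : ℕ} (hk : 0 < k)
    (hbot : ∀ j, MvPolynomial.aeval α (esymm σ A j) ∈ (⊥ : Subalgebra A R))
    (hM : ∀ j, 0 < j → j ≤ k → j * MvPolynomial.aeval α (esymm σ A j) ∈ M) :
    ∑ i, α i ^ k ∈ M := by
  induction k using Nat.strong_induction_on with
  | _ k ih =>
    have sign_mem (m : ℕ) : (-1 : R) ^ m ∈ (⊥ : Subalgebra A R) := pow_mem (neg_mem (one_mem _)) m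
    have bot_mul_mem {b x : R} (hb : b ∈ (⊥ : Subalgebra A R)) (hx : x ∈ M) : b * x ∈ M := by
      obtain ⟨a, rfl⟩ := Algebra.mem_bot.1 hb
      exact Algebra.smul_def a x ▸ M.smul_mem a hx
    rw [sum_pow_eq_mul_esymm_sub_sum A α hk]
    refine sub_mem ?_ (sum_mem fun a ha => ?_)
    · rw [mul_assoc]
      exact bot_mul_mem (sign_mem _) (hM k hk le_rfl)
    · obtain ⟨hak, ha0, hlt⟩ : a.1 + a.2 = k ∧ 0 < a.1 ∧ a.1 < k := by simpa using ha
      exact bot_mul_mem (mul_mem (sign_mem _) (hbot _))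
        (ih a.2 (by omega) (by omega) fun j hj hja => hM j hj (by omega))

variable {P : A[X]} {α : σ → R}

theorem aeval_esymm_eq_algebraMap_coeff (hP : P.map (algebraMap A R) = ∏ i, (X - C (α i)))
    {j : ℕ} (hj : j ≤ Fintype.card σ) :
    MvPolynomial.aeval α (esymm σ A j) =
      algebraMap A R ((-1) ^ j * P.coeff (Fintype.card σ - j)) := by
  have vieta := Multiset.prod_X_sub_C_coeff (univ.val.map α) (k := Fintype.card σ - j) (by simp)
  simp only [Multiset.map_map, Multiset.card_map, card_val, card_univ, Nat.sub_sub_self hj] at vieta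
  have hcoeff : algebraMap A R (P.coeff (Fintype.card σ - j)) =
      (-1) ^ j * (univ.val.map α).esymm j := by
    rw [← coeff_map, hP]
    exact vieta
  rw [MvPolynomial.aeval_esymm_eq_multiset_esymm, map_mul, hcoeff, ← mul_assoc]
  simp [← mul_pow]

theorem aeval_esymm_mem_bot (hP : P.map (algebraMap A R) = ∏ i, (X - C (α i))) (j : ℕ) :
    MvPolynomial.aeval α (esymm σ A j) ∈ (⊥ : Subalgebra A R) := by
  rcases le_or_gt j (Fintype.card σ) with hj | hj
  · exact Algebra.mem_bot.2 ⟨_, (aeval_esymm_eq_algebraMap_coeff hP hj).symm⟩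
  · simp [esymm_eq_zero_of_card_lt hj]

theorem sum_pow_mem_of_mul_coeff_mem (hP : P.map (algebraMap A R) = ∏ i, (X - C (α i)))
    (I : Ideal A) {k : ℕ} (hk : 0 < k) (hkσ : k ≤ Fintype.card σ)
    (hI : ∀ j, 0 < j → j ≤ k → j * P.coeff (Fintype.card σ - j) ∈ I) :
    ∃ a ∈ I, algebraMap A R a = ∑ i, α i ^ k := by
  refine sum_pow_mem_of_mul_esymm_mem (Submodule.map (Algebra.linearMap A R) I) hk
    (aeval_esymm_mem_bot hP) fun j hj hjk => ?_
  refine ⟨(-1) ^ j * (j * P.coeff (Fintype.card σ - j)), I.mul_mem_left _ (hI j hj hjk), ?_⟩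
  rw [aeval_esymm_eq_algebraMap_coeff hP (hjk.trans hkσ), Algebra.linearMap_apply, mul_left_comm,
    map_mul, map_natCast]

theorem exists_sum_pow_two_mul_eq (hP : P.map (algebraMap A R) = ∏ i, (X - C (α i)))
    {k : ℕ} (hk : 0 < k) (hkσ : k ≤ Fintype.card σ)
    (heven : ∀ j, 0 < j → j ≤ k → 2 ∣ j * P.coeff (Fintype.card σ - j)) :
    ∃ a : A, ∑ i, α i ^ (2 * k) = algebraMap A R (2 * a) := by
  obtain ⟨p, hp, hpk⟩ := sum_pow_mem_of_mul_coeff_mem hP (Ideal.span {2}) hk hkσ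
    fun j hj hjk => Ideal.mem_span_singleton.2 (heven j hj hjk)
  obtain ⟨b, rfl⟩ := Ideal.mem_span_singleton.1 hp
  obtain ⟨e, he⟩ := Algebra.mem_bot.1 <| aeval_mem_of_isSymmetric (aeval_esymm_mem_bot hP)
    (isSymmetric_expand (MvPolynomial.esymm_isSymmetric σ A 2) k)
  refine ⟨2 * b ^ 2 - e, ?_⟩
  rw [sum_pow_two_mul A, ← hpk, ← he]
  simp only [map_mul, map_sub, map_pow, map_ofNat]
  ring

end PowerSums

theorem coeff_sub_eq_zero_of_odd {A : Type*} [Semiring A] {s n j : ℕ} (hs : Even s) (hj : Odd j)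
    (hjn : j < n) :
    (X ^ n + X ^ (n - s) + X ^ (n - 2 * s) + X ^ (n - 3 * s) + 1 : A[X]).coeff (n - j) = 0 := by
  simp only [coeff_add, coeff_X_pow, coeff_one]
  grind

theorem S_two_n_sub_four_s_even_general {R : Type*} [CommRing R] (s n : ℕ) (hs : Even s)
    (hs0 : 0 < s) (hn : 3 * s < n) (α : Fin n → R)
    (hroots : (X ^ n + X ^ (n - s) + X ^ (n - 2 * s) + X ^ (n - 3 * s) + 1 :
        Polynomial ℤ).map (Int.castRingHom R) =
      ∏ i : Fin n, (X - C (α i))) :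
    ∃ k : ℤ, ∑ i : Fin n, (α i) ^ (2 * n - 4 * s) = (2 * k : ℤ) := by
  rw [show 2 * n - 4 * s = 2 * (n - 2 * s) by omega]
  refine exists_sum_pow_two_mul_eq hroots (by omega) (by simp) fun j _ hjk => ?_
  rw [Fintype.card_fin]
  rcases Nat.even_or_odd j with hj | hj
  · exact Dvd.dvd.mul_right (by exact_mod_cast hj.two_dvd) _
  · rw [coeff_sub_eq_zero_of_odd hs hj (by omega), mul_zero]
    exact dvd_zero 2

theorem S_two_n_sub_four_s_even (s n : ℕ) (hs : Even s) (hs0 : 0 < s)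
    (hodd : Odd n) (hn : 3 * s < n) (α : Fin n → ℂ)
    (hroots : (X ^ n + X ^ (n - s) + X ^ (n - 2 * s) + X ^ (n - 3 * s) + 1 :
        Polynomial ℤ).map (Int.castRingHom ℂ) =
      ∏ i : Fin n, (X - C (α i))) :
    ∃ k : ℤ, ∑ i : Fin n, (α i) ^ (2 * n - 4 * s) = (2 * k : ℤ) :=
  S_two_n_sub_four_s_even_general s n hs hs0 hn α hroots
end
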